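/- Let n ≥ 0. Define v : V_n → ℂ as follows: v(b_n) = 0; if n is even, v((2n,2n)) = −1; for every vertex x = (i₁, x₂) ∈ V_n with x₂ − i₁ = 2i₂+1 odd and x ≠ b_n, set v(x) = Σ_{ℓ=0}^{i₁} (−1)^{i₂+ℓ} binom(i₂−1+ℓ, ℓ) h_n^{1,b}(i₁−ℓ); and for every vertex x = (i₁, x₂) ∈ V_n with x₂ − i₁ = 2i₂ even and x ≠ (2n,2n), set v(x) = (−1)^{i₂} Σ_{ℓ=0}^{i₂} binom(i₂, ℓ) h_n^{0,b}(i₁+ℓ). Then for every x ∈ V_n, Σ_{y ∈ V_n} K_n(x,y)·v(y) equals 1 if x = b_n and equals 0 otherwise. Consequently, if K_n is invertible over ℂ, then K_n⁻¹(x, b_n) = v(x) for all x ∈ V_n. -/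

import Mathlib

open Finset

/-- Membership predicate for the vertex set `V_n` of the TSSCPP graph `G_n`:
`0 ≤ x₁ ≤ 2n`, `x₁ ≤ x₂ ≤ 2n+1`, with `(2n,2n+1)` removed when `n` is odd. -/
def memV (n : ℕ) (x : ℤ × ℤ) : Prop :=
  0 ≤ x.1 ∧ x.1 ≤ 2*(n:ℤ) ∧ x.1 ≤ x.2 ∧ x.2 ≤ 2*(n:ℤ)+1 ∧
    ¬(n % 2 = 1 ∧ x.1 = 2*(n:ℤ) ∧ x.2 = 2*(n:ℤ)+1)

instance memV.decPred (n : ℕ) : DecidablePred (memV n) := fun x => by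
  unfold memV; infer_instance

/-- The vertex set `V_n` as a finite set. -/
noncomputable def Vfin (n : ℕ) : Finset (ℤ × ℤ) :=
  (Finset.Icc (0:ℤ) (2*(n:ℤ)) ×ˢ Finset.Icc (0:ℤ) (2*(n:ℤ)+1)).filter (memV n)

/-- The vertex set `V_n` as a set. -/
def Vset (n : ℕ) : Set (ℤ × ℤ) := {x | memV n x}

/-- The distinguished vertex `b_n = (2n, 2n+1-(n mod 2))`. -/
def bvertex (n : ℕ) : ℤ × ℤ := (2*(n:ℤ), 2*(n:ℤ)+1 - ((n % 2 : ℕ) : ℤ))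

/-- Edge relation (with `x` the "lower-left" endpoint) of the TSSCPP graph `G_n`:
horizontal edges `((x₁,x₂),(x₁+1,x₂))` for `0 ≤ x₁ ≤ 2n−1`, `x₁ ≤ x₂ ≤ 2n+1`, `x₁+x₂` odd;
vertical edges `((x₁,x₂),(x₁,x₂+1))` for `0 ≤ x₁ ≤ 2n` (`2n−1` when `n` odd), `x₁ ≤ x₂ ≤ 2n`;
diagonal edges `((x₁,x₁),(x₁+1,x₁+1))` for `0 ≤ x₁ ≤ 2n−1`. -/
def edgeRel (n : ℕ) (x y : ℤ × ℤ) : Prop :=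
  (y.1 = x.1 + 1 ∧ y.2 = x.2 ∧ 0 ≤ x.1 ∧ x.1 ≤ 2*(n:ℤ) - 1 ∧ x.1 ≤ x.2 ∧
      x.2 ≤ 2*(n:ℤ)+1 ∧ Odd (x.1 + x.2)) ∨
  (y.1 = x.1 ∧ y.2 = x.2 + 1 ∧ 0 ≤ x.1 ∧ x.1 ≤ 2*(n:ℤ) - ((n % 2 : ℕ) : ℤ) ∧
      x.1 ≤ x.2 ∧ x.2 ≤ 2*(n:ℤ)) ∨
  (x.1 = x.2 ∧ y.1 = x.1 + 1 ∧ y.2 = x.2 + 1 ∧ 0 ≤ x.1 ∧ x.1 ≤ 2*(n:ℤ) - 1)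

/-- The TSSCPP graph `G_n` (as a graph on all of `ℤ × ℤ`; all of its edges join
vertices of `V_n`). -/
def Gph (n : ℕ) : SimpleGraph (ℤ × ℤ) where
  Adj x y := edgeRel n x y ∨ edgeRel n y x
  symm := ⟨fun x y h => Or.symm h⟩
  loopless := by
    constructor
    rintro ⟨x1, x2⟩ (h | h) <;>
      rcases h with ⟨h1, h2, -⟩ | ⟨h1, h2, -⟩ | ⟨h0, h1, h2, -⟩ <;> omega

/-- `Zpm n U` = number of perfect matchings of the subgraph of `G_n` induced on `V_n \ U`. -/
noncomputable def Zpm (n : ℕ) (U : Set (ℤ × ℤ)) : ℕ :=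
  Nat.card {M : ((Gph n).induce (Vset n \ U)).Subgraph // M.IsPerfectMatching}

/-- The entry function `k(x,y)` of the Kasteleyn matrix (over `ℂ`). -/
def kfunC (x y : ℤ × ℤ) : ℂ :=
  if ((x.1 + x.2) % 2 = 0 ∧ x.2 = y.2 ∧ x.1 - y.1 = 1) ∨
     ((x.1 + x.2) % 2 = 0 ∧ x.1 = y.1 ∧ (y.2 - x.2 = 1 ∨ x.2 - y.2 = 1)) ∨
     (x.1 = x.2 ∧ y.1 = y.2 ∧ y.1 = x.1 - 1)
  then 1 else 0

/-- The Kasteleyn matrix `K_n` of `G_n` over `ℂ`, rows and columns indexed by `V_n`. -/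
def KmatC (n : ℕ) : Matrix ↥(Vfin n) ↥(Vfin n) ℂ :=
  fun x y => kfunC x.val y.val - kfunC y.val x.val

/-- `p(n,k,ℓ) = (−1)^k (3n−3k+2) C_{n−k} (n+k−2ℓ+1)! (2n−k−ℓ+1)! / ((k−ℓ)! (3n−k+2−2ℓ)!)`. -/
def pnk (n k l : ℕ) : ℚ :=
  (-1)^k * (3*(n:ℚ) - 3*(k:ℚ) + 2) * (catalan (n-k) : ℚ) *
    (Nat.factorial (n+k-2*l+1) : ℚ) * (Nat.factorial (2*n-k-l+1) : ℚ) /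
    ((Nat.factorial (k-l) : ℚ) * (Nat.factorial (3*n-k+2-2*l) : ℚ))

/-- `h_n^{0,b}(i) = −((i+1) mod 2) + Σ_{k=0}^{n} p(n,k,0)·(1/2πi)∮ (1+r)^{n−k}(1−r)^{-1}r^{2k−i} dr`,
over the positively oriented circle of radius `1/2` centred at the origin. -/
noncomputable def h0b (n i : ℕ) : ℂ :=
  -((((i+1) % 2 : ℕ) : ℂ)) + ∑ k ∈ Finset.range (n+1), ((pnk n k 0 : ℚ) : ℂ) *
    (1/(2*(Real.pi : ℂ)*Complex.I)) *
    (∮ r in C(0, 1/2), (1+r)^(n-k) * (1-r)⁻¹ * r^(2*(k:ℤ) - (i:ℤ)))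

/-- `h_n^{1,b}(i) = Σ_{k=0}^{n} p(n,k,0)·(1/2πi)∮ (1+r)^{n−k} r^{2k−i−1} dr`,
over the positively oriented circle of radius `1/2` centred at the origin. -/
noncomputable def h1b (n i : ℕ) : ℂ :=
  ∑ k ∈ Finset.range (n+1), ((pnk n k 0 : ℚ) : ℂ) *
    (1/(2*(Real.pi : ℂ)*Complex.I)) *
    (∮ r in C(0, 1/2), (1+r)^(n-k) * r^(2*(k:ℤ) - (i:ℤ) - 1))

/-- Generalized binomial coefficient `binom(m,ℓ) = m(m−1)⋯(m−ℓ+1)/ℓ!` for integer `m`. -/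
noncomputable def genBinom (m : ℤ) (l : ℕ) : ℂ :=
  (∏ t ∈ Finset.range l, ((m : ℂ) - (t : ℂ))) / (Nat.factorial l : ℂ)

/-- The candidate column `v` of `K_n⁻¹` at `b_n`: `v(b_n) = 0`; `v((2n,2n)) = −1` when `n`
is even; `v(i₁, i₁+2i₂+1) = Σ_{ℓ=0}^{i₁} (−1)^{i₂+ℓ} binom(i₂−1+ℓ,ℓ)·h_n^{1,b}(i₁−ℓ)`;
and `v(i₁, i₁+2i₂) = (−1)^{i₂} Σ_{ℓ=0}^{i₂} binom(i₂,ℓ)·h_n^{0,b}(i₁+ℓ)`. -/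
noncomputable def vfun (n : ℕ) (x : ℤ × ℤ) : ℂ :=
  if x = bvertex n then 0
  else if x = (2*(n:ℤ), 2*(n:ℤ)) then -1
  else if (x.2 - x.1) % 2 = 1 then
    ∑ l ∈ Finset.range (x.1.toNat + 1),
      (-1)^(((x.2 - x.1 - 1)/2).toNat + l) *
        genBinom ((((x.2 - x.1 - 1)/2).toNat : ℤ) - 1 + (l : ℤ)) l *
        h1b n (x.1.toNat - l)
  else
    (-1)^(((x.2 - x.1)/2).toNat) *
      ∑ l ∈ Finset.range (((x.2 - x.1)/2).toNat + 1),
        genBinom ((((x.2 - x.1)/2).toNat : ℤ)) l * h0b n (x.1.toNat + l)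

/-!
Let `P(r) = ∑ k, p(n, k, 0) (1 + r)^(n - k) r^(2k)`. By residues, `h_n^{1,b}(i)` is the coefficient
of `r^i` in `P`, and the generating series `D` of `h_n^{0,b}` satisfies
`(1 - r²) D = r (1 + r) P - 1`. The value of `v` at `(i, i + 2j + 1)` is then the coefficient of
`r^i` in `(-(1 + r))^(-j) P`, and its value at `(i, i + 2j)` is the coefficient of `r^(i + j)` in
`(-(1 + r))^j D`. Away from the upper boundary, the rows of `K_n v = e_{b_n}` off the diagonal say
that consecutive series differ by the factor `-(1 + r)`, and those on the diagonal are the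
functional equation of `D`.

At the boundary the series must have vanishing coefficients on the line `x₂ = 2n + 2`. For odd
`x₂ - x₁` this holds term by term in `k`, since `(1 + r)^(n - k - j)` is a polynomial of small
degree whenever `r^(2k)` is not already of too high a degree. For even `x₂ - x₁` it follows by
induction from the identities `2 P(1) = 1 + (-1)^n` and `[r^(2n - b)] (2 + r)(1 + r)^(b + 1) P = 0`
for `b < n`, two hypergeometric sums evaluated by creative telescoping.
-/

/-- The reciprocal factorial `1 / z!` on the integers, with the value `0` at negative `z` dictated
by the recurrence `1 / (z - 1)! = z / z!`. -/
def invFactorial (z : ℤ) : ℚ := if z < 0 then 0 else 1 / z.toNat.factorial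

lemma invFactorial_of_neg {z : ℤ} (hz : z < 0) : invFactorial z = 0 := if_pos hz

lemma invFactorial_natCast (m : ℕ) : invFactorial m = 1 / m.factorial := by
  simp [invFactorial]

lemma invFactorial_sub_one (z : ℤ) : invFactorial (z - 1) = z * invFactorial z := by
  rcases lt_trichotomy z 0 with hz | rfl | hz
  · rw [invFactorial_of_neg hz, invFactorial_of_neg (by omega), mul_zero]
  · simp [invFactorial]
  · obtain ⟨m, rfl⟩ : ∃ m : ℕ, z = (m + 1 : ℕ) := ⟨(z - 1).toNat, by omega⟩
    rw [invFactorial_natCast, Nat.factorial_succ, Nat.cast_succ, add_sub_cancel_right,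
      invFactorial_natCast]
    push_cast
    field_simp

lemma invFactorial_sub_two (z : ℤ) : invFactorial (z - 2) = z * (z - 1) * invFactorial z := by
  rw [show z - 2 = z - 1 - 1 by ring, invFactorial_sub_one, invFactorial_sub_one]
  push_cast
  ring

lemma cast_choose_eq_invFactorial (N M : ℕ) :
    (N.choose M : ℚ) = N.factorial * invFactorial M * invFactorial (N - M) := by
  rcases le_or_gt M N with h | h
  · rw [← Nat.cast_sub h, invFactorial_natCast, invFactorial_natCast, Nat.cast_choose ℚ h]
    field_simp
  · rw [Nat.choose_eq_zero_of_lt h, invFactorial_of_neg (by omega : (N : ℤ) - M < 0)]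
    simp

lemma cast_catalan_succ (a : ℕ) :
    (catalan (a + 1) : ℚ) = 2 * (2 * a + 1) / (a + 2) * catalan a := by
  have h : ((a + 1 : ℚ) + 1) * catalan (a + 1) = 2 * (2 * a + 1) * catalan a := by
    have h₀ : ((a : ℚ) + 1) * catalan a = a.centralBinom := by
      exact_mod_cast succ_mul_catalan_eq_centralBinom a
    have h₁ : ((a + 1 : ℚ) + 1) * catalan (a + 1) = (a + 1).centralBinom := by
      exact_mod_cast succ_mul_catalan_eq_centralBinom (a + 1)
    have h₂ : ((a : ℚ) + 1) * (a + 1).centralBinom = 2 * (2 * a + 1) * a.centralBinom := by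
      exact_mod_cast Nat.succ_mul_centralBinom_succ a
    refine mul_left_cancel₀ (a.cast_add_one_ne_zero (R := ℚ)) ?_
    rw [h₁, h₂, ← h₀]
    ring
  field_simp
  linear_combination h

/-- The quotient `p(n, n - a, 0) / (3a + 2)`, extended by zero to `a > n`. -/
def weight (n a : ℕ) : ℚ :=
  (-1) ^ (n + a) * catalan a * (n + a + 1).factorial * (2 * n + 1 - a).factorial *
    invFactorial (n - a) / (2 * n + a + 2).factorial

lemma pnk_sub {n a : ℕ} (ha : a ≤ n) : pnk n (n - a) 0 = (3 * a + 2) * weight n a := by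
  obtain ⟨k, rfl⟩ := Nat.exists_eq_add_of_le ha
  have hsign : (-1 : ℚ) ^ (a + k + a) = (-1) ^ k := by
    rw [show a + k + a = k + 2 * a by ring, pow_add, pow_mul, neg_one_sq, one_pow, mul_one]
  have hk : ((a + k : ℕ) : ℤ) - a = k := by push_cast; ring
  rw [pnk, weight, hsign, hk, invFactorial_natCast, show a + k - a = k by omega,
    show a + k - k = a by omega, show 2 * (a + k) - k - 0 + 1 = a + k + a + 1 by omega,
    show a + k + k - 2 * 0 + 1 = 2 * (a + k) + 1 - a by omega, Nat.sub_zero,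
    show 3 * (a + k) - k + 2 - 2 * 0 = 2 * (a + k) + a + 2 by omega]
  push_cast
  field_simp
  ring

lemma weight_of_lt {n a : ℕ} (h : n < a) : weight n a = 0 := by
  simp [weight, invFactorial_of_neg (by omega : (n : ℤ) - a < 0)]

lemma two_mul_weight_zero (n : ℕ) : 2 * weight n 0 = (-1) ^ n := by
  have h : (n : ℤ) - (0 : ℕ) = n := by simp
  rw [weight, h, invFactorial_natCast]
  simp only [Nat.sub_zero, add_zero, catalan_zero, Nat.factorial_succ]
  push_cast
  field_simp
  ring

lemma pnk_self (n : ℕ) : pnk n n 0 = (-1) ^ n := by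
  simpa [two_mul_weight_zero] using pnk_sub n.zero_le

lemma weight_succ_right {n a : ℕ} (ha : a ≤ n) :
    (a + 2) * (2 * n + a + 3) * (2 * n + 1 - a) * weight n (a + 1) =
      -(2 * (2 * a + 1) * (n + a + 2) * (n - a) * weight n a) := by
  obtain ⟨c, hc⟩ := Nat.exists_eq_add_of_le ha
  have hc' : (c : ℚ) = n - a := by rw [eq_sub_iff_add_eq']; exact_mod_cast hc.symm
  have hinv := invFactorial_sub_one c
  simp only [weight]
  rw [show 2 * n + 1 - a = n + c + 1 by omega, show 2 * n + 1 - (a + 1) = n + c by omega,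
    show 2 * n + (a + 1) + 2 = 2 * n + a + 2 + 1 by omega,
    ← add_assoc n a 1, Nat.factorial_succ (n + a + 1),
    Nat.factorial_succ (n + c), Nat.factorial_succ (2 * n + a + 2), cast_catalan_succ,
    show (n : ℤ) - (a + 1 : ℕ) = c - 1 by omega, show (n : ℤ) - a = c by omega, hinv]
  push_cast
  rw [hc']
  field_simp
  ring

lemma weight_succ_left {n a : ℕ} (ha : a ≤ n + 1) :
    (n + a + 2) * (2 * n + 3 - a) * (2 * n + 2 - a) * weight n a =
      -((n + 1 - a) * (2 * n + a + 3) * (2 * n + a + 4) * weight (n + 1) a) := by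
  obtain ⟨c, hc⟩ := Nat.exists_eq_add_of_le ha
  have hc' : (c : ℚ) = n + 1 - a := by rw [eq_sub_iff_add_eq']; exact_mod_cast hc.symm
  have hinv := invFactorial_sub_one c
  simp only [weight]
  rw [show 2 * n + 1 - a = n + c by omega, show 2 * (n + 1) + 1 - a = n + c + 1 + 1 by omega,
    show n + 1 + a + 1 = n + a + 1 + 1 by omega, show n + 1 + a = n + a + 1 by omega,
    show 2 * (n + 1) + a + 2 = 2 * n + a + 2 + 1 + 1 by omega,
    Nat.factorial_succ (n + c + 1), Nat.factorial_succ (n + c), Nat.factorial_succ (n + a + 1),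
    Nat.factorial_succ (2 * n + a + 2 + 1), Nat.factorial_succ (2 * n + a + 2),
    show (n : ℤ) - a = c - 1 by omega, show ((n + 1 : ℕ) : ℤ) - a = c by omega, hinv]
  push_cast
  rw [hc']
  field_simp
  ring

/-- The Wilf-Zeilberger certificate for the recurrence in `n` of `∑ a, 2 ^ a * p(n, n - a, 0)`:
the summand of the recurrence is its forward difference in `a`. -/
def evalCertificate (n a : ℕ) : ℚ :=
  -(2 ^ a * (2 * n + 3) * (a + 1) * (2 * n + a + 4) / ((n + a + 2) * (2 * n + 3 - a)) *
    weight (n + 1) a)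

lemma evalCertificate_sub {n a : ℕ} (ha : a ≤ n + 1) :
    2 ^ a * ((3 * a + 2) * weight (n + 1) a) - 2 ^ a * ((3 * a + 2) * weight n a) =
      evalCertificate n (a + 1) - evalCertificate n a := by
  have ha' : (a : ℚ) ≤ n + 1 := by exact_mod_cast ha
  have hn : (0 : ℚ) ≤ n := n.cast_nonneg
  have h₂ : (2 * (n + 1) - a : ℚ) ≠ 0 := by linarith [hn]
  have h₃ : (2 * n + 3 - a : ℚ) ≠ 0 := by linarith [hn]
  have h₃' : (2 * n + 3 - (a + 1) : ℚ) ≠ 0 := by linarith [hn]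
  have hright : weight (n + 1) (a + 1) = -(2 * (2 * a + 1) * (n + a + 3) * (n + 1 - a) *
      weight (n + 1) a / ((a + 2) * (2 * n + a + 5) * (2 * n + 3 - a))) := by
    rw [← neg_div, eq_div_iff (by positivity)]
    have := weight_succ_right ha
    push_cast at this
    linear_combination this
  have hleft : weight n a = -((n + 1 - a) * (2 * n + a + 3) * (2 * n + a + 4) *
      weight (n + 1) a / ((n + a + 2) * (2 * n + 3 - a) * (2 * n + 2 - a))) := by
    have h₂' : (2 * n + 2 - a : ℚ) ≠ 0 := by linarith [hn]
    rw [← neg_div, eq_div_iff (by positivity)]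
    linear_combination weight_succ_left ha
  simp only [evalCertificate]
  rw [hright, hleft]
  push_cast
  field_simp
  ring

lemma evalCertificate_zero (n : ℕ) : evalCertificate n 0 = (-1) ^ n := by
  have h : weight (n + 1) 0 = -(-1) ^ n / 2 := by
    linear_combination two_mul_weight_zero (n + 1) / 2
  have hn : (2 * n + 3 - 0 : ℚ) ≠ 0 := by rw [sub_zero]; positivity
  rw [evalCertificate, h]
  push_cast
  field_simp
  ring

lemma two_mul_sum_two_pow_mul_weight (n : ℕ) :
    2 * ∑ a ∈ range (n + 1), 2 ^ a * ((3 * a + 2) * weight n a) = 1 + (-1) ^ n := by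
  induction n with
  | zero => norm_num [two_mul_weight_zero]
  | succ n ih =>
    have hstep : ∑ a ∈ range (n + 2), 2 ^ a * ((3 * a + 2) * weight (n + 1) a) -
        ∑ a ∈ range (n + 2), 2 ^ a * ((3 * a + 2) * weight n a) = -(-1) ^ n := by
      rw [← sum_sub_distrib, sum_congr rfl fun a ha ↦
        evalCertificate_sub (Nat.lt_succ_iff.mp (mem_range.mp ha)),
        sum_range_sub, evalCertificate_zero, evalCertificate, weight_of_lt (by omega)]
      ring
    rw [sum_range_succ (fun a : ℕ ↦ (2 : ℚ) ^ a * ((3 * a + 2) * weight n a)),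
      weight_of_lt n.lt_succ_self] at hstep
    linear_combination 2 * hstep + ih

/-- Up to the linear factor `3b + 4`, the value at `b + 1` of this hypergeometric term is
`C(a + b + 1, 2a - b) + C(a + b + 2, 2a - b)`, a coefficient of `(2 + X)(1 + X)^(a + b + 1)`. -/
def kernel (b a : ℕ) : ℚ :=
  (a + b).factorial * invFactorial (2 * a - b + 1) * invFactorial (2 * b - a)

/-- The common hypergeometric multiple of `kernel b a` and `kernel (b + 1) a` from which the
telescoping certificate is built. -/
def kernelAux (b a : ℕ) : ℚ :=
  (a + b).factorial * invFactorial (2 * a - b + 1) * invFactorial (2 * b + 2 - a)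

lemma kernel_eq_mul_kernelAux (b a : ℕ) :
    kernel b a = (2 * b + 2 - a) * (2 * b + 1 - a) * kernelAux b a := by
  have h := invFactorial_sub_two (2 * b + 2 - a)
  rw [show (2 * b + 2 - a - 2 : ℤ) = 2 * b - a by ring] at h
  rw [kernel, kernelAux, h]
  push_cast
  ring

lemma kernel_succ_left (b a : ℕ) :
    kernel (b + 1) a = (a + b + 1) * (2 * a - b + 1) * kernelAux b a := by
  have h := invFactorial_sub_one (2 * a - b + 1)
  rw [kernel, kernelAux, ← add_assoc, Nat.factorial_succ,
    show (2 * a - (b + 1 : ℕ) + 1 : ℤ) = 2 * a - b + 1 - 1 by push_cast; ring, h,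
    show (2 * (b + 1 : ℕ) - a : ℤ) = 2 * b + 2 - a by push_cast; ring]
  push_cast
  ring

lemma kernelAux_succ_right (b a : ℕ) :
    (2 * a - b + 3) * (2 * a - b + 2) * kernelAux b (a + 1) =
      (a + b + 1) * (2 * b + 2 - a) * kernelAux b a := by
  have h₁ := invFactorial_sub_two (2 * a - b + 3)
  have h₂ := invFactorial_sub_one (2 * b + 2 - a)
  rw [show (2 * a - b + 3 - 2 : ℤ) = 2 * a - b + 1 by ring] at h₁
  rw [kernelAux, kernelAux, h₁, add_right_comm, Nat.factorial_succ,
    show (2 * (a + 1 : ℕ) - b + 1 : ℤ) = 2 * a - b + 3 by push_cast; ring,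
    show (2 * b + 2 - (a + 1 : ℕ) : ℤ) = 2 * b + 2 - a - 1 by push_cast; ring, h₂]
  push_cast
  ring

/-- The Wilf-Zeilberger certificate for the recurrence in `b` of
`∑ a, p(n, n - a, 0) * kernel b a`: the summand of the recurrence is its forward difference
in `a`. -/
def kernelCertificate (n b a : ℕ) : ℚ :=
  -(3 * (b + 1) * (a + 1) * (2 * n + 2 - a) * (2 * n + a + 2) * weight n a *
    ((2 * a - b + 1) * (2 * a - b) * kernelAux b a))

lemma kernelCertificate_sub {n a : ℕ} (b : ℕ) (ha : a ≤ n) :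
    b * (2 * n + 1 - b) * (2 * n + 3 + b) * ((3 * a + 2) * weight n a * kernel b a) +
      2 * (2 * b + 3) * (n - b) * (n + b + 2) * ((3 * a + 2) * weight n a * kernel (b + 1) a) =
    kernelCertificate n b (a + 1) - kernelCertificate n b a := by
  have hw := weight_succ_right ha
  have hk := kernelAux_succ_right b a
  rw [kernel_eq_mul_kernelAux, kernel_succ_left, kernelCertificate, kernelCertificate]
  push_cast
  linear_combination 3 * (b + 1) * (a + b + 1) * (2 * b + 2 - a) * kernelAux b a * hw +
    3 * (b + 1) * (a + 2) * (2 * n + 1 - a) * (2 * n + a + 3) * weight n (a + 1) * hk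

lemma sum_weight_mul_kernel_succ {n b : ℕ} (hb : b < n) :
    ∑ a ∈ range (n + 1), (3 * a + 2) * weight n a * kernel (b + 1) a = 0 := by
  have hrec : b * (2 * n + 1 - b) * (2 * n + 3 + b) *
        (∑ a ∈ range (n + 1), (3 * a + 2) * weight n a * kernel b a) +
      2 * (2 * b + 3) * (n - b) * (n + b + 2) *
        (∑ a ∈ range (n + 1), (3 * a + 2) * weight n a * kernel (b + 1) a) = 0 := by
    have hzero : kernelCertificate n b 0 = 0 := by
      have h := invFactorial_sub_two (1 - b)
      rw [invFactorial_of_neg (by omega)] at h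
      push_cast at h
      simp only [kernelCertificate, kernelAux]
      push_cast
      rw [show (0 - b + 1 : ℤ) = 1 - b by ring]
      linear_combination 3 * (b + 1) * (2 * n + 2) * (2 * n + 2) * weight n 0 *
        ((0 + b).factorial * invFactorial (2 * b + 2 - 0)) * h
    rw [mul_sum, mul_sum, ← sum_add_distrib,
      sum_congr rfl fun a ha ↦ kernelCertificate_sub b (Nat.lt_succ_iff.mp (mem_range.mp ha)),
      sum_range_sub, hzero, kernelCertificate, weight_of_lt n.lt_succ_self]
    ring
  have hprev : b * ∑ a ∈ range (n + 1), (3 * a + 2) * weight n a * kernel b a = 0 := by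
    cases b with
    | zero => simp
    | succ b => rw [sum_weight_mul_kernel_succ (by omega), mul_zero]
  have hpos : (0 : ℚ) < n - b := by
    rw [sub_pos]; exact_mod_cast hb
  refine (mul_eq_zero.mp ?_).resolve_left
    (by positivity : 2 * (2 * (b : ℚ) + 3) * (n - b) * (n + b + 2) ≠ 0)
  linear_combination hrec - (2 * n + 1 - b) * (2 * n + 3 + b) * hprev

lemma choose_add_choose_eq_kernel {a b : ℕ} (h : b ≤ 2 * a) :
    ((a + b + 1).choose (2 * a - b) + (a + b + 2).choose (2 * a - b) : ℚ) =
      (3 * b + 4) * kernel (b + 1) a := by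
  have hz : ((2 * a - b : ℕ) : ℤ) = 2 * a - b := by push_cast [h]; ring
  have h₂ := invFactorial_sub_one (2 * b + 2 - a)
  rw [cast_choose_eq_invFactorial, cast_choose_eq_invFactorial, kernel, ← add_assoc, hz,
    show ((a + b + 1 : ℕ) - (2 * a - b) : ℤ) = 2 * b + 2 - a - 1 by push_cast; ring,
    show ((a + b + 2 : ℕ) - (2 * a - b) : ℤ) = 2 * b + 2 - a by push_cast; ring,
    show (2 * a - (b + 1 : ℕ) + 1 : ℤ) = 2 * a - b by push_cast; ring,
    show (2 * (b + 1 : ℕ) - a : ℤ) = 2 * b + 2 - a by push_cast; ring, h₂,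
    Nat.factorial_succ (a + b + 1)]
  push_cast
  ring

section ColumnPolynomial

open Polynomial

/-- The generating polynomial `∑ k, p(n, k, 0) (1 + r)^(n - k) r^(2k)` read off from the integrands
of `h1b n`, whose values are its coefficients. -/
noncomputable def columnPoly (n : ℕ) : ℂ[X] :=
  ∑ k ∈ range (n + 1), C (pnk n k 0 : ℂ) * ((1 + X) ^ (n - k) * X ^ (2 * k))

lemma columnPoly_eq_sum_weight (n : ℕ) :
    columnPoly n = ∑ a ∈ range (n + 1),
      C (((3 * a + 2) * weight n a : ℚ) : ℂ) * ((1 + X) ^ a * X ^ (2 * (n - a))) := by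
  rw [columnPoly, ← sum_flip]
  refine sum_congr rfl fun a ha ↦ ?_
  have ha : a ≤ n := Nat.lt_succ_iff.mp (mem_range.mp ha)
  rw [pnk_sub ha, Nat.sub_sub_self ha]

lemma two_mul_eval_one_columnPoly (n : ℕ) : 2 * (columnPoly n).eval 1 = 1 + (-1) ^ n := by
  have h := congrArg (Rat.cast (K := ℂ)) (two_mul_sum_two_pow_mul_weight n)
  rw [columnPoly_eq_sum_weight, eval_finsetSum]
  push_cast at h
  rw [← h, mul_right_inj' two_ne_zero]
  refine sum_congr rfl fun a _ ↦ ?_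
  simp only [eval_mul, eval_C, eval_pow, eval_add, eval_one, eval_X]
  push_cast
  ring

lemma natDegree_C_mul_one_add_X_pow_mul_X_pow_le {R : Type*} [CommSemiring R] (c : R) (N M : ℕ) :
    (C c * ((1 + X) ^ N * X ^ M)).natDegree ≤ N + M := by
  compute_degree

lemma natDegree_columnPoly_le (n : ℕ) : (columnPoly n).natDegree ≤ 2 * n :=
  natDegree_sum_le_of_forall_le _ _ fun k hk ↦
    (natDegree_C_mul_one_add_X_pow_mul_X_pow_le _ _ _).trans <| by
      have := mem_range.mp hk
      omega

lemma coeff_columnPoly_two_mul (n : ℕ) : (columnPoly n).coeff (2 * n) = (-1) ^ n := by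
  rw [columnPoly, finsetSum_coeff, sum_eq_single_of_mem n (self_mem_range_succ n)]
  · rw [coeff_C_mul, Nat.sub_self, pow_zero, one_mul, coeff_X_pow_self, pnk_self]
    simp
  · intro k hk hkn
    have := mem_range.mp hk
    exact coeff_eq_zero_of_natDegree_lt
      ((natDegree_C_mul_one_add_X_pow_mul_X_pow_le _ _ _).trans_lt (by omega))

lemma coeff_two_add_X_mul_one_add_X_pow {R : Type*} [CommSemiring R] (N M : ℕ) :
    ((2 + X) * (1 + X) ^ N : R[X]).coeff M = N.choose M + (N + 1).choose M := by
  rw [show (2 + X) * (1 + X) ^ N = ((1 + X) ^ N + (1 + X) ^ (N + 1) : R[X]) by ring, coeff_add,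
    coeff_one_add_X_pow, coeff_one_add_X_pow]

lemma coeff_two_add_X_mul_one_add_X_pow_mul_columnPoly {n b : ℕ} (hb : b < n) :
    ((2 + X) * (1 + X) ^ (b + 1) * columnPoly n).coeff (2 * n - b) = 0 := by
  have hterm (a : ℕ) (ha : a ≤ n) :
      ((2 + X) * (1 + X) ^ (b + 1) * (C (((3 * a + 2) * weight n a : ℚ) : ℂ) *
        ((1 + X) ^ a * X ^ (2 * (n - a))))).coeff (2 * n - b) =
      (((3 * b + 4) * ((3 * a + 2) * weight n a * kernel (b + 1) a) : ℚ) : ℂ) := by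
    rw [show (2 + X) * (1 + X) ^ (b + 1) * (C (((3 * a + 2) * weight n a : ℚ) : ℂ) *
        ((1 + X) ^ a * X ^ (2 * (n - a)))) = C (((3 * a + 2) * weight n a : ℚ) : ℂ) *
        ((2 + X) * (1 + X) ^ (a + b + 1) * X ^ (2 * (n - a))) by ring,
      coeff_C_mul, coeff_mul_X_pow']
    split_ifs with h
    · have hk := congrArg (Rat.cast (K := ℂ))
        (choose_add_choose_eq_kernel (a := a) (b := b) (by omega))
      rw [show 2 * n - b - 2 * (n - a) = 2 * a - b by omega, coeff_two_add_X_mul_one_add_X_pow]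
      push_cast at hk ⊢
      rw [hk]
      ring
    · rw [kernel, invFactorial_of_neg (by push_cast; omega)]
      simp
  rw [columnPoly_eq_sum_weight, mul_sum, finsetSum_coeff,
    sum_congr rfl fun a ha ↦ hterm a (Nat.lt_succ_iff.mp (mem_range.mp ha)), ← Rat.cast_sum,
    ← mul_sum, sum_weight_mul_kernel_succ hb, mul_zero, Rat.cast_zero]

end ColumnPolynomial

section Contour

open Polynomial Metric

lemma circleIntegral_eval_mul_zpow {R : ℝ} (hR : 0 < R) (Q : ℂ[X]) (d : ℕ) :
    (∮ z in C(0, R), Q.eval z * z ^ (-(d : ℤ) - 1)) = 2 * Real.pi * Complex.I * Q.coeff d := by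
  have hterm (j : ℕ) : (∮ z in C(0, R), Q.coeff j * (z - 0) ^ ((j : ℤ) - d - 1)) =
      if d = j then 2 * Real.pi * Complex.I * Q.coeff j else 0 := by
    rw [circleIntegral.integral_const_mul]
    split_ifs with h
    · rw [← h, sub_self, zero_sub]
      simp only [zpow_neg_one]
      rw [circleIntegral.integral_sub_center_inv 0 hR.ne', mul_comm]
    · rw [circleIntegral.integral_sub_zpow_of_ne (by omega), mul_zero]
  have hsum : Set.EqOn (fun z : ℂ ↦ Q.eval z * z ^ (-(d : ℤ) - 1))
      (fun z ↦ ∑ j ∈ range (max Q.natDegree d + 1), Q.coeff j * (z - 0) ^ ((j : ℤ) - d - 1))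
      (sphere 0 R) := fun z hz ↦ by
    have hz₀ : z ≠ 0 := ne_of_mem_sphere hz hR.ne'
    simp only [sub_zero]
    rw [eval_eq_sum_range' (n := max Q.natDegree d + 1) (by omega), sum_mul]
    refine sum_congr rfl fun j _ ↦ ?_
    rw [mul_assoc, ← zpow_natCast, ← zpow_add₀ hz₀, ← add_sub_assoc, ← sub_eq_add_neg]
  rw [circleIntegral.integral_congr hR.le hsum, circleIntegral.integral_fun_sum fun j _ ↦ ?_,
    sum_congr rfl fun j _ ↦ hterm j, sum_ite_eq, if_pos (mem_range.mpr (by omega))]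
  refine ContinuousOn.circleIntegrable hR.le (continuousOn_const.mul ?_)
  exact (continuousOn_id.sub continuousOn_const).zpow₀ _ fun z hz ↦
    Or.inl (sub_ne_zero.mpr (ne_of_mem_sphere hz hR.ne'))

lemma circleIntegral_eval_add_mul_zpow {R : ℝ} (hR : 0 < R) (Q : ℂ[X]) (d : ℕ) {f g : ℂ → ℂ}
    (hg : DiffContOnCl ℂ g (ball 0 R))
    (hf : ∀ z ∈ sphere 0 R, f z = (Q.eval z + z ^ (d + 1) * g z) * z ^ (-(d : ℤ) - 1)) :
    (∮ z in C(0, R), f z) = 2 * Real.pi * Complex.I * Q.coeff d := by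
  have hsplit : Set.EqOn f (fun z ↦ Q.eval z * z ^ (-(d : ℤ) - 1) + g z) (sphere 0 R) :=
    fun z hz ↦ by
      have hz₀ : z ≠ 0 := ne_of_mem_sphere hz hR.ne'
      have hpow : z ^ (d + 1) * z ^ (-(d : ℤ) - 1) = 1 := by
        rw [← zpow_natCast, ← zpow_add₀ hz₀]
        simp
      rw [hf z hz]
      linear_combination g z * hpow
  have hint : CircleIntegrable (fun z ↦ Q.eval z * z ^ (-(d : ℤ) - 1)) 0 R :=
    ContinuousOn.circleIntegrable hR.le <| Q.continuous.continuousOn.mul <|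
      continuousOn_id.zpow₀ _ fun _ hz ↦ Or.inl (ne_of_mem_sphere hz hR.ne')
  have hint' : CircleIntegrable g 0 R :=
    ContinuousOn.circleIntegrable hR.le <| hg.continuousOn_ball.mono sphere_subset_closedBall
  rw [circleIntegral.integral_congr hR.le hsplit, circleIntegral.integral_add hint hint',
    hg.circleIntegral_eq_zero hR.le, circleIntegral_eval_mul_zpow hR, add_zero]

lemma one_div_two_pi_I_mul_cancel (c : ℂ) :
    1 / (2 * (Real.pi : ℂ) * Complex.I) * (2 * Real.pi * Complex.I * c) = c := by
  rw [one_div, inv_mul_cancel_left₀ Complex.two_pi_I_ne_zero]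

lemma h1b_eq_coeff (n i : ℕ) : h1b n i = (columnPoly n).coeff i := by
  rw [h1b, columnPoly, finsetSum_coeff]
  refine sum_congr rfl fun k _ ↦ ?_
  rw [circleIntegral_eval_add_mul_zpow (by norm_num) ((1 + X) ^ (n - k) * X ^ (2 * k)) i
    (diffContOnCl_const (c := (0 : ℂ))) fun z hz ↦ ?_, mul_assoc, one_div_two_pi_I_mul_cancel,
    coeff_C_mul]
  have hz₀ : z ≠ 0 := ne_of_mem_sphere hz (by norm_num)
  simp only [eval_mul, eval_pow, eval_add, eval_one, eval_X, mul_zero, add_zero]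
  rw [mul_assoc, ← zpow_natCast z (2 * k), ← zpow_add₀ hz₀]
  push_cast
  ring_nf

lemma coeff_mul_X_mul_geom_sum {R : Type*} [CommSemiring R] (P : R[X]) (i : ℕ) :
    (P * (X * ∑ s ∈ range i, X ^ s)).coeff i = ∑ j ∈ range i, P.coeff j := by
  rw [mul_sum, mul_sum, finsetSum_coeff, ← sum_range_reflect]
  refine sum_congr rfl fun j hj ↦ ?_
  have hj : j < i := mem_range.mp hj
  rw [← pow_succ', coeff_mul_X_pow', if_pos (by omega)]
  congr 1
  omega

lemma h0b_eq_sum_coeff (n i : ℕ) :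
    h0b n i = -(((i + 1) % 2 : ℕ) : ℂ) + ∑ j ∈ range i, (columnPoly n).coeff j := by
  simp only [h0b, columnPoly, finsetSum_coeff]
  rw [sum_comm]
  refine congrArg _ (sum_congr rfl fun k _ ↦ ?_)
  have hne {z : ℂ} (hz : z ∈ closedBall 0 (1 / 2)) : 1 - z ≠ 0 := fun h ↦ by
    rw [← sub_eq_zero.mp h] at hz
    norm_num at hz
  have hdiff : DiffContOnCl ℂ (fun z ↦ (1 + z) ^ (n - k) * z ^ (2 * k) * (1 - z)⁻¹)
      (ball (0 : ℂ) (1 / 2)) := by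
    refine DifferentiableOn.diffContOnCl fun z hz ↦ DifferentiableAt.differentiableWithinAt ?_
    have := hne (closure_ball_subset_closedBall hz)
    fun_prop (disch := assumption)
  rw [circleIntegral_eval_add_mul_zpow (by norm_num)
    ((1 + X) ^ (n - k) * X ^ (2 * k) * (X * ∑ s ∈ range i, X ^ s)) i hdiff fun z hz ↦ ?_,
    coeff_mul_X_mul_geom_sum, mul_assoc, one_div_two_pi_I_mul_cancel, mul_sum]
  · simp only [coeff_C_mul]
  · have hz₀ : z ≠ 0 := ne_of_mem_sphere hz (by norm_num)
    have hgeom : ∑ s ∈ range i, z ^ s = (1 - z ^ i) * (1 - z)⁻¹ := by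
      rw [eq_mul_inv_iff_mul_eq₀ (hne (sphere_subset_closedBall hz)), geom_sum_mul_neg]
    have hpow : z ^ (2 * (k : ℤ) - i) = z ^ (2 * k) * z * z ^ (-(i : ℤ) - 1) := by
      rw [← pow_succ, ← zpow_natCast, ← zpow_add₀ hz₀]
      push_cast
      ring_nf
    simp only [eval_mul, eval_pow, eval_add, eval_one, eval_X, eval_finsetSum]
    rw [hgeom, hpow]
    ring

end Contour

section ColumnSeries

open PowerSeries

lemma genBinom_eq_choose (m : ℤ) (l : ℕ) : genBinom m l = (Ring.choose m l : ℤ) := by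
  have h : (l.factorial : ℤ) * Ring.choose m l = ∏ t ∈ range l, (m - t) := by
    rw [← descPochhammer_eval_eq_prod_range, Polynomial.eval_eq_smeval,
      Ring.descPochhammer_eq_factorial_smul_choose, nsmul_eq_mul]
  rw [genBinom, div_eq_iff (Nat.cast_ne_zero.mpr l.factorial_ne_zero), mul_comm]
  exact_mod_cast congrArg (Int.cast (R := ℂ)) h.symm

lemma genBinom_natCast (m l : ℕ) : genBinom m l = m.choose l := by
  rw [genBinom_eq_choose, Ring.choose_natCast, Int.cast_natCast]

lemma coeff_binomialSeries_neg (j l : ℕ) :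
    coeff l (binomialSeries ℂ (-(j : ℤ))) = (-1) ^ l * genBinom (j - 1 + l) l := by
  rw [binomialSeries_coeff, Ring.choose_neg, genBinom_eq_choose, add_sub_right_comm]
  simp [Int.negOnePow_def, Units.smul_def]

lemma sum_choose_mul_coeff_add {R : Type*} [CommSemiring R] (F : R⟦X⟧) (N i : ℕ) :
    ∑ l ∈ range (N + 1), N.choose l * coeff (i + l) F = coeff (i + N) ((1 + X) ^ N * F) := by
  rw [add_comm 1 X, add_pow, sum_mul, map_sum, ← sum_flip]
  refine sum_congr rfl fun l hl ↦ ?_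
  have hl : l ≤ N := Nat.lt_succ_iff.mp (mem_range.mp hl)
  rw [one_pow, mul_one, mul_assoc, ← add_tsub_assoc_of_le hl, coeff_X_pow_mul',
    if_pos (by omega), ← map_natCast C, coeff_C_mul, Nat.choose_symm hl]

lemma h0b_add_two (n i : ℕ) :
    h0b n (i + 2) = h0b n i + (columnPoly n).coeff i + (columnPoly n).coeff (i + 1) := by
  rw [h0b_eq_sum_coeff, h0b_eq_sum_coeff, sum_range_succ, sum_range_succ,
    show (i + 2 + 1) % 2 = (i + 1) % 2 by omega]
  ring

lemma two_mul_h0b_two_mul (n : ℕ) : 2 * h0b n (2 * n) = -(1 + (-1) ^ n) := by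
  have h := two_mul_eval_one_columnPoly n
  rw [Polynomial.eval_eq_sum_range' (Nat.lt_succ_of_le (natDegree_columnPoly_le n)),
    sum_range_succ, coeff_columnPoly_two_mul] at h
  simp only [one_pow, mul_one] at h
  rw [h0b_eq_sum_coeff, show (2 * n + 1) % 2 = 1 by omega, Nat.cast_one]
  linear_combination h

lemma h0b_two_mul_add_one (n : ℕ) : h0b n (2 * n + 1) = -h0b n (2 * n) := by
  have h : h0b n (2 * n + 1) = h0b n (2 * n) + 1 + (-1) ^ n := by
    rw [h0b_eq_sum_coeff, h0b_eq_sum_coeff, sum_range_succ, coeff_columnPoly_two_mul,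
      show (2 * n + 1 + 1) % 2 = 0 by omega, show (2 * n + 1) % 2 = 1 by omega]
    push_cast
    ring
  linear_combination h + two_mul_h0b_two_mul n

/-- The generating series of `h0b n`, the values of the column on the diagonal. -/
noncomputable def diagSeries (n : ℕ) : ℂ⟦X⟧ := PowerSeries.mk (h0b n)

lemma one_sub_X_sq_mul_diagSeries (n : ℕ) :
    (1 - X ^ 2) * diagSeries n = X * ((1 + X) * (columnPoly n : ℂ⟦X⟧)) - 1 := by
  have hcoeff (i : ℕ) : coeff i (columnPoly n : ℂ⟦X⟧) = (columnPoly n).coeff i :=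
    Polynomial.coeff_coe _ i
  rw [sub_mul, one_mul, pow_two, mul_assoc]
  ext i
  match i with
  | 0 => simp [diagSeries, h0b_eq_sum_coeff]
  | 1 => simp [diagSeries, h0b_eq_sum_coeff, add_mul, coeff_one]
  | i + 1 + 1 =>
    rw [map_sub, map_sub, coeff_succ_X_mul, coeff_succ_X_mul, coeff_succ_X_mul, add_mul, one_mul,
      map_add, coeff_succ_X_mul, diagSeries, coeff_mk, coeff_mk, h0b_add_two, hcoeff, hcoeff]
    rw [coeff_one, if_neg (Nat.succ_ne_zero _)]
    ring

lemma coeff_one_add_X_pow_mul_diagSeries {n b : ℕ} (hb : b ≤ n) :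
    coeff (2 * n + 1 - b) ((1 + X) ^ (b + 1) * diagSeries n) = 0 := by
  induction b with
  | zero =>
    rw [zero_add, pow_one, add_mul, one_mul, map_add, Nat.sub_zero, coeff_succ_X_mul, diagSeries,
      coeff_mk, coeff_mk, h0b_two_mul_add_one, neg_add_cancel]
  | succ b ih =>
    obtain ⟨d, hd⟩ : ∃ d, 2 * n - b = d := ⟨_, rfl⟩
    have hstep : X * ((1 + X) ^ (b + 2) * diagSeries n) =
        C 2 * ((1 + X) ^ (b + 1) * diagSeries n) -
          X * (((2 + Polynomial.X) * (1 + Polynomial.X) ^ (b + 1) * columnPoly n :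
            Polynomial ℂ) : ℂ⟦X⟧) +
          (((2 + Polynomial.X) * (1 + Polynomial.X) ^ b : Polynomial ℂ) : ℂ⟦X⟧) := by
      have htwo : ((2 : Polynomial ℂ) : ℂ⟦X⟧) = 2 :=
        map_ofNat Polynomial.coeToPowerSeries.ringHom 2
      rw [map_ofNat]
      push_cast
      rw [htwo]
      linear_combination (-(2 + X) * (1 + X) ^ b) * one_sub_X_sq_mul_diagSeries n
    have hcoeff := congrArg (coeff (2 * n - b + 1)) hstep
    rw [map_add, map_sub, coeff_succ_X_mul, coeff_succ_X_mul, coeff_C_mul, Polynomial.coeff_coe,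
      Polynomial.coeff_coe, coeff_two_add_X_mul_one_add_X_pow_mul_columnPoly (by omega),
      coeff_two_add_X_mul_one_add_X_pow, Nat.choose_eq_zero_of_lt (by omega),
      Nat.choose_eq_zero_of_lt (by omega), show 2 * n - b + 1 = 2 * n + 1 - b by omega,
      ih (by omega)] at hcoeff
    rw [show 2 * n + 1 - (b + 1) = 2 * n - b by omega, hcoeff]
    simp

lemma coeff_binomialSeries_neg_mul_columnPoly {n j : ℕ} (hj : j ≤ n) :
    coeff (2 * (n - j) + 1) (binomialSeries ℂ (-(j : ℤ)) * (columnPoly n : ℂ⟦X⟧)) = 0 := by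
  have hcoe : (columnPoly n : ℂ⟦X⟧) =
      ∑ k ∈ range (n + 1), C (pnk n k 0 : ℂ) * ((1 + X) ^ (n - k) * X ^ (2 * k)) := by
    rw [columnPoly, ← Polynomial.coeToPowerSeries.ringHom_apply, map_sum]
    simp
  rw [hcoe, mul_sum, map_sum]
  refine sum_eq_zero fun k _ ↦ ?_
  rw [mul_left_comm, coeff_C_mul, ← mul_assoc, coeff_mul_X_pow']
  split_ifs with h
  · obtain ⟨N, hN⟩ : ∃ N, n - k = j + N := ⟨n - k - j, by omega⟩
    rw [hN, pow_add, ← mul_assoc, ← binomialSeries_nat (R := ℤ), ← binomialSeries_add,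
      neg_add_cancel, binomialSeries_zero, one_mul, ← binomialSeries_nat (R := ℤ),
      binomialSeries_coeff, Ring.choose_natCast, Nat.choose_eq_zero_of_lt (by omega)]
    simp
  · rw [mul_zero]

/-- The series whose coefficient of degree `i + j` is the value of the column at
`(i, i + 2j)`. -/
noncomputable def evenSeries (n j : ℕ) : ℂ⟦X⟧ := (-(1 + X)) ^ j * diagSeries n

/-- The series whose coefficient of degree `i` is the value of the column at `(i, i + 2j + 1)`. -/
noncomputable def oddSeries (n j : ℕ) : ℂ⟦X⟧ :=
  (-1) ^ j * (binomialSeries ℂ (-(j : ℤ)) * (columnPoly n : ℂ⟦X⟧))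

lemma evenSeries_zero (n : ℕ) : evenSeries n 0 = diagSeries n := by
  rw [evenSeries, pow_zero, one_mul]

lemma oddSeries_zero (n : ℕ) : oddSeries n 0 = columnPoly n := by
  simp [oddSeries]

lemma evenSeries_succ (n j : ℕ) : evenSeries n (j + 1) = -(1 + X) * evenSeries n j := by
  rw [evenSeries, evenSeries, pow_succ', mul_assoc]

lemma neg_one_add_X_mul_oddSeries_succ (n j : ℕ) :
    -(1 + X) * oddSeries n (j + 1) = oddSeries n j := by
  have h : binomialSeries ℂ (-(j : ℤ)) = (1 + X) * binomialSeries ℂ (-((j + 1 : ℕ) : ℤ)) := by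
    rw [← pow_one (1 + X : ℂ⟦X⟧), ← binomialSeries_nat (R := ℤ), ← binomialSeries_add]
    push_cast
    ring_nf
  rw [oddSeries, oddSeries, h]
  ring

lemma coeff_evenSeries (n i j : ℕ) :
    coeff (i + j) (evenSeries n j) =
      (-1) ^ j * ∑ l ∈ range (j + 1), genBinom j l * h0b n (i + l) := by
  have h := sum_choose_mul_coeff_add (diagSeries n) j i
  simp only [diagSeries, coeff_mk] at h
  simp only [genBinom_natCast]
  rw [h, evenSeries, neg_pow, mul_assoc, ← map_one C, ← map_neg, ← map_pow, coeff_C_mul]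
  rfl

lemma coeff_oddSeries (n i j : ℕ) :
    coeff i (oddSeries n j) =
      ∑ l ∈ range (i + 1), (-1) ^ (j + l) * genBinom (j - 1 + l) l * h1b n (i - l) := by
  rw [oddSeries, ← map_one C, ← map_neg, ← map_pow, coeff_C_mul, coeff_mul,
    Nat.sum_antidiagonal_eq_sum_range_succ_mk, mul_sum]
  refine sum_congr rfl fun l _ ↦ ?_
  rw [coeff_binomialSeries_neg, Polynomial.coeff_coe, h1b_eq_coeff]
  ring

lemma coeff_evenSeries_eq_zero {n i j : ℕ} (hj : j ≤ n) (h : i + 2 * j = 2 * n) :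
    coeff (i + j + 1) (evenSeries n (j + 1)) = 0 := by
  rw [evenSeries, neg_pow, mul_assoc, ← map_one C, ← map_neg, ← map_pow, coeff_C_mul, map_one,
    show i + j + 1 = 2 * n + 1 - j by omega, coeff_one_add_X_pow_mul_diagSeries hj, mul_zero]

lemma coeff_oddSeries_eq_zero {n i j : ℕ} (hj : j ≤ n) (h : i + 2 * j = 2 * n + 1) :
    coeff i (oddSeries n j) = 0 := by
  rw [oddSeries, ← map_one C, ← map_neg, ← map_pow, coeff_C_mul,
    show i = 2 * (n - j) + 1 by omega, coeff_binomialSeries_neg_mul_columnPoly hj, mul_zero]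

end ColumnSeries

lemma mem_Vfin {n : ℕ} {x : ℤ × ℤ} : x ∈ Vfin n ↔ memV n x := by
  simp only [Vfin, mem_filter, mem_product, mem_Icc, memV]
  omega

/-- The column `vfun n`, extended by zero outside `V_n`, so that the rows of `K_n` can be read
without distinguishing the vertices with missing neighbours. -/
noncomputable def extCol (n : ℕ) (x : ℤ × ℤ) : ℂ := if x ∈ Vfin n then vfun n x else 0

lemma extCol_of_not_memV {n : ℕ} {x : ℤ × ℤ} (h : ¬ memV n x) : extCol n x = 0 :=
  if_neg (mt mem_Vfin.1 h)

lemma vfun_corner (n : ℕ) : vfun n (2 * n, 2 * n) = h0b n (2 * n) := by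
  have h := two_mul_h0b_two_mul n
  rw [vfun]
  rcases n.even_or_odd with hn | hn
  · rw [if_neg (by simp [bvertex, Nat.even_iff.mp hn]), if_pos rfl]
    rw [hn.neg_one_pow] at h
    linear_combination -h / 2
  · rw [if_pos (by simp [bvertex, Nat.odd_iff.mp hn])]
    rw [hn.neg_one_pow] at h
    linear_combination -h / 2

lemma extCol_corner_add_one (n : ℕ) : extCol n (2 * n, 2 * n + 1) = 0 := by
  rcases Nat.mod_two_eq_zero_or_one n with hn | hn
  · have h : ((2 * n, 2 * n + 1) : ℤ × ℤ) = bvertex n := by simp [bvertex, hn]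
    rw [extCol, vfun, if_pos h, ite_self]
  · exact extCol_of_not_memV fun h ↦ h.2.2.2.2 ⟨hn, rfl, rfl⟩

section GeneratingSeries

open PowerSeries

variable {n i j : ℕ}

-- The vanishing coefficients make the formula hold also on the line `x₂ = 2n + 2` above `V_n`.
lemma extCol_eq_coeff_evenSeries (hi : i ≤ 2 * n) (h : i + 2 * j ≤ 2 * n + 2) :
    extCol n (i, i + 2 * j) = coeff (i + j) (evenSeries n j) := by
  by_cases htop : i + 2 * j = 2 * n + 2
  · obtain ⟨k, rfl⟩ : ∃ k, j = k + 1 := ⟨j - 1, by omega⟩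
    rw [extCol_of_not_memV (by simp only [memV]; omega), ← add_assoc,
      coeff_evenSeries_eq_zero (by omega) (by omega)]
  rw [extCol, if_pos (mem_Vfin.2 (by simp only [memV]; omega)), coeff_evenSeries]
  by_cases hcorner : i = 2 * n
  · obtain rfl : j = 0 := by omega
    subst hcorner
    simpa [genBinom] using vfun_corner n
  · rw [vfun, if_neg (by simp only [bvertex, Prod.mk.injEq]; omega),
      if_neg (by simp only [Prod.mk.injEq]; omega), if_neg (by dsimp only; omega),
      add_sub_cancel_left, Int.mul_ediv_cancel_left _ two_ne_zero, Int.toNat_natCast,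
      Int.toNat_natCast]

lemma extCol_eq_coeff_oddSeries (hi : i < 2 * n) (h : i + 2 * j ≤ 2 * n + 1) :
    extCol n (i, i + 2 * j + 1) = coeff i (oddSeries n j) := by
  by_cases htop : i + 2 * j = 2 * n + 1
  · rw [extCol_of_not_memV (by simp only [memV]; omega),
      coeff_oddSeries_eq_zero (by omega) htop]
  rw [extCol, if_pos (mem_Vfin.2 (by simp only [memV]; omega)), coeff_oddSeries, vfun,
    if_neg (by simp only [bvertex, Prod.mk.injEq]; omega),
    if_neg (by simp only [Prod.mk.injEq]; omega), if_pos (by dsimp only; omega)]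
  dsimp only
  rw [show ((i : ℤ) + 2 * j + 1 - i - 1) / 2 = j by omega, Int.toNat_natCast, Int.toNat_natCast]

lemma extCol_sub_one_eq_coeff_X_mul_oddSeries (hi : i ≤ 2 * n) (h : i + 2 * j ≤ 2 * n + 2) :
    extCol n (i - 1, i + 2 * j) = coeff i (X * oddSeries n j) := by
  cases i with
  | zero => rw [extCol_of_not_memV (by simp only [memV]; omega), coeff_zero_X_mul]
  | succ i =>
    rw [coeff_succ_X_mul, ← extCol_eq_coeff_oddSeries (by omega) (by omega)]
    push_cast
    ring_nf

lemma extCol_diag_eq_coeff_diagSeries (hi : i ≤ 2 * n) :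
    extCol n (i, i) = coeff i (diagSeries n) := by
  simpa [evenSeries_zero] using extCol_eq_coeff_evenSeries (j := 0) hi (by omega)

lemma extCol_diag_sub_one_eq_coeff_X_mul_diagSeries (hi : i ≤ 2 * n + 1) :
    extCol n (i - 1, i - 1) = coeff i (X * diagSeries n) := by
  cases i with
  | zero => rw [extCol_of_not_memV (by simp only [memV]; omega), coeff_zero_X_mul]
  | succ i =>
    rw [coeff_succ_X_mul, ← extCol_diag_eq_coeff_diagSeries (by omega), Nat.cast_succ,
      add_sub_cancel_right]

end GeneratingSeries

lemma kfunC_sub_odd {a b : ℤ} (h : (a + b) % 2 = 1) (y : ℤ × ℤ) :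
    kfunC (a, b) y - kfunC y (a, b) =
      -((if y = (a + 1, b) then 1 else 0) + (if y = (a, b + 1) then 1 else 0) +
        if y = (a, b - 1) then 1 else 0) := by
  obtain ⟨c, d⟩ := y
  simp only [kfunC, Prod.mk.injEq]
  grind

lemma kfunC_sub_even {a b : ℤ} (h : (a + b) % 2 = 0) (hab : a ≠ b) (y : ℤ × ℤ) :
    kfunC (a, b) y - kfunC y (a, b) =
      (if y = (a - 1, b) then 1 else 0) + (if y = (a, b + 1) then 1 else 0) +
        if y = (a, b - 1) then 1 else 0 := by
  obtain ⟨c, d⟩ := y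
  simp only [kfunC, Prod.mk.injEq]
  grind

lemma kfunC_sub_diag (a : ℤ) (y : ℤ × ℤ) :
    kfunC (a, a) y - kfunC y (a, a) =
      (if y = (a - 1, a) then 1 else 0) + (if y = (a, a + 1) then 1 else 0) +
        (if y = (a, a - 1) then 1 else 0) + (if y = (a - 1, a - 1) then 1 else 0) -
        if y = (a + 1, a + 1) then 1 else 0 := by
  obtain ⟨c, d⟩ := y
  have ha : (a + a) % 2 = 0 := by omega
  simp only [kfunC, Prod.mk.injEq, ha, true_and]
  grind (splits := 16)

/-- The entry of `K_n · vfun n` in the row of the vertex `x`. -/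
noncomputable def rowSum (n : ℕ) (x : ℤ × ℤ) : ℂ :=
  ∑ y ∈ Vfin n, (kfunC x y - kfunC y x) * vfun n y

lemma sum_ite_eq_mul_vfun (n : ℕ) (z : ℤ × ℤ) :
    ∑ y ∈ Vfin n, (if y = z then 1 else 0) * vfun n y = extCol n z := by
  simp [extCol]

lemma rowSum_odd (n : ℕ) {a b : ℤ} (h : (a + b) % 2 = 1) :
    rowSum n (a, b) = -(extCol n (a + 1, b) + extCol n (a, b + 1) + extCol n (a, b - 1)) := by
  simp only [rowSum, kfunC_sub_odd h, neg_mul, add_mul, sum_neg_distrib, sum_add_distrib,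
    sum_ite_eq_mul_vfun]

lemma rowSum_even (n : ℕ) {a b : ℤ} (h : (a + b) % 2 = 0) (hab : a ≠ b) :
    rowSum n (a, b) = extCol n (a - 1, b) + extCol n (a, b + 1) + extCol n (a, b - 1) := by
  simp only [rowSum, kfunC_sub_even h hab, add_mul, sum_add_distrib, sum_ite_eq_mul_vfun]

lemma rowSum_diag (n : ℕ) (a : ℤ) :
    rowSum n (a, a) = extCol n (a - 1, a) + extCol n (a, a + 1) + extCol n (a, a - 1) +
      extCol n (a - 1, a - 1) - extCol n (a + 1, a + 1) := by
  simp only [rowSum, kfunC_sub_diag, sub_mul, add_mul, sum_sub_distrib, sum_add_distrib,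
    sum_ite_eq_mul_vfun]

section Rows

open PowerSeries

lemma rowSum_odd_eq_zero {n i j : ℕ} (hi : i < 2 * n) (h : i + 2 * j ≤ 2 * n) :
    rowSum n (i, i + 2 * j + 1) = 0 := by
  have hright : extCol n (i + 1, i + 2 * j + 1) = coeff (i + j + 1) (evenSeries n j) := by
    rw [show i + j + 1 = i + 1 + j by ring,
      ← extCol_eq_coeff_evenSeries (by omega) (by omega)]
    push_cast
    ring_nf
  have hup : extCol n (i, i + 2 * j + 1 + 1) = coeff (i + j + 1) (evenSeries n (j + 1)) := by
    rw [show i + j + 1 = i + (j + 1) by ring,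
      ← extCol_eq_coeff_evenSeries (by omega) (by omega)]
    push_cast
    ring_nf
  rw [rowSum_odd n (by omega), hright, hup, add_sub_cancel_right,
    extCol_eq_coeff_evenSeries hi.le (by omega), evenSeries_succ, neg_mul, add_mul, one_mul,
    map_neg, map_add, coeff_succ_X_mul]
  ring

lemma rowSum_even_eq_zero {n i j : ℕ} (hi : i ≤ 2 * n) (h : i + 2 * (j + 1) ≤ 2 * n + 1) :
    rowSum n (i, i + 2 * (j + 1 : ℕ)) = 0 := by
  have hdown : extCol n (i, i + 2 * (j + 1 : ℕ) - 1) = coeff i (oddSeries n j) := by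
    rw [← extCol_eq_coeff_oddSeries (by omega) (by omega)]
    push_cast
    ring_nf
  rw [rowSum_even n (by omega) (by omega), hdown,
    extCol_sub_one_eq_coeff_X_mul_oddSeries hi (by omega),
    extCol_eq_coeff_oddSeries (by omega) (by omega), ← neg_one_add_X_mul_oddSeries_succ n j,
    neg_mul, add_mul, one_mul, map_neg, map_add]
  ring

lemma rowSum_diag_eq_zero {n i : ℕ} (hi : i < 2 * n) : rowSum n (i, i) = 0 := by
  have hleft : extCol n (i - 1, i) = coeff i (X * (columnPoly n : ℂ⟦X⟧)) := by
    simpa [oddSeries_zero] using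
      extCol_sub_one_eq_coeff_X_mul_oddSeries (j := 0) hi.le (by omega)
  have hup : extCol n (i, i + 1) = coeff i (columnPoly n : ℂ⟦X⟧) := by
    simpa [oddSeries_zero] using extCol_eq_coeff_oddSeries (j := 0) hi (by omega)
  have hnext : extCol n (i + 1, i + 1) = coeff (i + 1) (diagSeries n) := by
    exact_mod_cast extCol_diag_eq_coeff_diagSeries (n := n) (i := i + 1) (by omega)
  rw [rowSum_diag, hleft, hup, hnext, extCol_diag_sub_one_eq_coeff_X_mul_diagSeries (by omega),
    extCol_of_not_memV (x := (i, i - 1)) (by simp only [memV]; omega)]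
  have hcoeff := congrArg (coeff (i + 1)) (one_sub_X_sq_mul_diagSeries n)
  rw [sub_mul, one_mul, pow_two, mul_assoc, map_sub, map_sub, coeff_succ_X_mul, coeff_succ_X_mul,
    add_mul, one_mul, map_add, coeff_one, if_neg i.succ_ne_zero] at hcoeff
  linear_combination -hcoeff

lemma rowSum_corner (n : ℕ) : rowSum n (2 * n, 2 * n) = if Odd n then 1 else 0 := by
  have hleft : extCol n (2 * n - 1, 2 * n) = coeff (2 * n) (X * (columnPoly n : ℂ⟦X⟧)) := by
    simpa [oddSeries_zero] using
      extCol_sub_one_eq_coeff_X_mul_oddSeries (n := n) (i := 2 * n) (j := 0) le_rfl (by omega)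
  have hdiag : extCol n (2 * n - 1, 2 * n - 1) = coeff (2 * n) (X * diagSeries n) := by
    simpa using extCol_diag_sub_one_eq_coeff_X_mul_diagSeries (n := n) (i := 2 * n) (by omega)
  rw [rowSum_diag, hleft, hdiag, extCol_corner_add_one,
    extCol_of_not_memV (x := (2 * n, 2 * n - 1)) (by simp only [memV]; omega),
    extCol_of_not_memV (x := (2 * n + 1, 2 * n + 1)) (by simp only [memV]; omega)]
  have hcoeff := congrArg (coeff (2 * n + 1)) (one_sub_X_sq_mul_diagSeries n)
  rw [sub_mul, one_mul, pow_two, mul_assoc, map_sub, map_sub, coeff_succ_X_mul, coeff_succ_X_mul,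
    add_mul, one_mul, map_add, coeff_one, if_neg (2 * n).succ_ne_zero, Polynomial.coeff_coe,
    coeff_columnPoly_two_mul, diagSeries, coeff_mk, h0b_two_mul_add_one] at hcoeff
  have hh := two_mul_h0b_two_mul n
  rw [diagSeries]
  split_ifs with hn
  · rw [hn.neg_one_pow] at hcoeff hh
    linear_combination -hcoeff - hh / 2
  · rw [(Nat.not_odd_iff_even.mp hn).neg_one_pow] at hcoeff hh
    linear_combination -hcoeff - hh / 2

lemma rowSum_corner_add_one {n : ℕ} (hn : Even n) : rowSum n (2 * n, 2 * n + 1) = 1 := by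
  have hh := two_mul_h0b_two_mul n
  have hdown : extCol n (2 * n, 2 * n) = h0b n (2 * n) := by
    simpa [diagSeries] using extCol_diag_eq_coeff_diagSeries (n := n) (i := 2 * n) le_rfl
  rw [rowSum_odd n (by omega), extCol_of_not_memV (by simp only [memV]; omega),
    extCol_of_not_memV (by simp only [memV]; omega), add_sub_cancel_right, hdown]
  rw [hn.neg_one_pow] at hh
  linear_combination -hh / 2

lemma rowSum_eq {n : ℕ} {x : ℤ × ℤ} (hx : memV n x) :
    rowSum n x = if x = bvertex n then 1 else 0 := by
  obtain ⟨a, b⟩ := x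
  obtain ⟨ha, ha', hab, hb, hcorner⟩ := hx
  dsimp only at ha ha' hab hb hcorner
  lift a to ℕ using ha with i
  obtain ⟨d, rfl⟩ := Int.le.dest hab
  rcases eq_or_ne i (2 * n) with rfl | hi
  · obtain rfl | rfl : d = 0 ∨ d = 1 := by omega
    · have hiff : (2 * (n : ℤ), 2 * (n : ℤ)) = bvertex n ↔ Odd n := by
        simp only [bvertex, Prod.mk.injEq, true_and, Nat.odd_iff]
        omega
      simpa [hiff] using rowSum_corner n
    · have hn : n % 2 = 0 := by omega
      simpa [bvertex, hn] using rowSum_corner_add_one (Nat.even_iff.mpr hn)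
  · rw [if_neg (by simp only [bvertex, Prod.mk.injEq]; omega)]
    obtain ⟨j, rfl | rfl⟩ := d.even_or_odd'
    · cases j with
      | zero => simpa using rowSum_diag_eq_zero (n := n) (i := i) (by omega)
      | succ j =>
        exact_mod_cast rowSum_even_eq_zero (n := n) (i := i) (j := j) (by omega) (by omega)
    · rw [Nat.cast_succ, Nat.cast_mul, Nat.cast_ofNat, ← add_assoc]
      exact rowSum_odd_eq_zero (by omega) (by omega)

end Rows

lemma nonsing_inv_apply_eq_of_mulVec_eq_single {m R : Type*} [Fintype m] [DecidableEq m]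
    [CommRing R] {A : Matrix m m R} (hA : IsUnit A.det) {v : m → R} {b : m}
    (h : A.mulVec v = Pi.single b 1) (x : m) : A⁻¹ x b = v x := by
  have hv : A⁻¹.mulVec (Pi.single b 1) = v := by
    rw [← h, Matrix.mulVec_mulVec, Matrix.nonsing_inv_mul A hA, Matrix.one_mulVec]
  rw [← hv, Matrix.mulVec_single_one, Matrix.col_apply]

/-- `v` solves `K_n·v = e_{b_n}`; consequently, if `K_n` is invertible over `ℂ`, the
column of `K_n⁻¹` at `b_n` is given by `v`. -/
theorem Kinv_column_b (n : ℕ) :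
    (∀ x : ↥(Vfin n),
      ∑ y : ↥(Vfin n), KmatC n x y * vfun n y.val
        = if x.val = bvertex n then 1 else 0) ∧
    (IsUnit (KmatC n).det → ∀ (x : ↥(Vfin n)) (hb : bvertex n ∈ Vfin n),
      (KmatC n)⁻¹ x ⟨bvertex n, hb⟩ = vfun n x.val) := by
  have hK (x : ↥(Vfin n)) : ∑ y : ↥(Vfin n), KmatC n x y * vfun n y.val =
      if x.val = bvertex n then 1 else 0 :=
    (sum_coe_sort (Vfin n) fun y ↦ (kfunC x.val y - kfunC y x.val) * vfun n y).trans
      (rowSum_eq (mem_Vfin.1 x.2))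
  refine ⟨hK, fun hdet x hb ↦ nonsing_inv_apply_eq_of_mulVec_eq_single
    (v := fun y ↦ vfun n y.val) hdet (funext fun z ↦ (hK z).trans ?_) x⟩
  simp only [Pi.single_apply, Subtype.ext_iff]
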